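/- Suppose the positive integers s₁ and s₂ satisfy: s₁² > (3n−1)m·s₁·s₂ + 3n·s₁ + m²·s₂² + 9m(n−1)·s₂; s₁·s₂ > 3n·s₁ + m²·s₂² + 9m(n−1)·s₂; and s₁ > m²·s₂² + 9m(n−1)·s₂. Then the sink of the transitive tournament induced by F_n is a Slater winner of T_φ if and only if there exists a satisfying assignment of φ that sets x_n to True and whose weight is maximum among all satisfying assignments of φ. -/

import Mathlib

/-! ### The tournament `T_φ` of the reduction

A CNF formula `φ` with variables `x_1, …, x_n` and clauses `c_1, …, c_m` in which no
variable occurs twice in a clause is given by its occurrence function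
`occ : Fin n → Fin m → Option Bool`, where `occ i j = some true` (resp. `some false`)
means `x_i` occurs positively (resp. negatively) in `c_j`, and `none` means `x_i`
does not occur in `c_j`. -/

/-- The names of the `6n + m` modules of the tournament `T_φ`. -/
inductive ModName (n m : ℕ) : Type where
  | A : Fin n → ModName n m
  | B : Fin n → ModName n m
  | C : Fin n → ModName n m
  | D : Fin n → ModName n m
  | E : Fin n → ModName n m
  | F : Fin n → ModName n m
  | T : Fin m → ModName n m
  deriving DecidableEq, Fintype

/-- The group (variable index) of a module, if it is a variable module. -/
def grp? {n m : ℕ} : ModName n m → Option (Fin n)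
  | .A i => some i
  | .B i => some i
  | .C i => some i
  | .D i => some i
  | .E i => some i
  | .F i => some i
  | .T _ => none

/-- The clause index of a module, if it is a clause module. -/
def clause? {n m : ℕ} : ModName n m → Option (Fin m)
  | .T j => some j
  | _ => none

/-- The rank of a module within its group: `A = 0, B = 1, C = 2, D = 3, E = 4, F = 5`. -/
def rk {n m : ℕ} : ModName n m → ℕ
  | .A _ => 0
  | .B _ => 1
  | .C _ => 2
  | .D _ => 3
  | .E _ => 4
  | .F _ => 5
  | .T _ => 6

/-- The size of each module: `A_i, B_i, C_i, D_i, F_i` have size `s₁`; `E_i` has size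
`s₁ + 2` for `i < n` and `s₁ + 3` for `i = n` (i.e. index `n - 1`); `T_j` has size `s₂`. -/
def msize (n m s₁ s₂ : ℕ) : ModName n m → ℕ
  | .A _ => s₁
  | .B _ => s₁
  | .C _ => s₁
  | .D _ => s₁
  | .E i => if (i : ℕ) = n - 1 then s₁ + 3 else s₁ + 2
  | .F _ => s₁
  | .T _ => s₂

/-- The vertex set of `T_φ`: a vertex is a module name together with an index inside
the module. -/
abbrev Vtx (n m s₁ s₂ : ℕ) : Type := Σ M : ModName n m, Fin (msize n m s₁ s₂ M)

/-- Whether all arcs go from `T_j` to the variable module of rank `r` of a group `i`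
with `occ i j = o`: if `x_i` does not occur in `c_j`, `T_j` beats `A_i ∪ B_i ∪ C_i`
(ranks 0,1,2); if positively, `T_j` beats `A_i ∪ B_i ∪ F_i` (ranks 0,1,5); if
negatively, `T_j` beats `A_i ∪ C_i ∪ D_i` (ranks 0,2,3). -/
def tBeats : Option Bool → ℕ → Prop
  | none, r => r = 0 ∨ r = 1 ∨ r = 2
  | some true, r => r = 0 ∨ r = 1 ∨ r = 5
  | some false, r => r = 0 ∨ r = 2 ∨ r = 3

/-- The direction of the arcs between two distinct modules of `T_φ`. -/
def modArc {n m : ℕ} (occ : Fin n → Fin m → Option Bool) (M M' : ModName n m) : Prop :=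
  (∃ i i' : Fin n, grp? M = some i ∧ grp? M' = some i' ∧
    (i < i' ∨ (i = i' ∧ ((rk M < rk M' ∧ ¬(rk M = 3 ∧ rk M' = 5)) ∨
      (rk M = 5 ∧ rk M' = 3))))) ∨
  (∃ j j' : Fin m, clause? M = some j ∧ clause? M' = some j' ∧ j < j') ∨
  (∃ j : Fin m, ∃ i : Fin n, clause? M = some j ∧ grp? M' = some i ∧
    tBeats (occ i j) (rk M')) ∨
  (∃ i : Fin n, ∃ j : Fin m, grp? M = some i ∧ clause? M' = some j ∧
    ¬ tBeats (occ i j) (rk M))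

/-- The arc relation of the tournament `T_φ`: inside a module, arcs follow the
transitive order of the indices; between distinct modules, arcs are given by `modArc`. -/
def arc {n m s₁ s₂ : ℕ} (occ : Fin n → Fin m → Option Bool) :
    Vtx n m s₁ s₂ → Vtx n m s₁ s₂ → Prop :=
  fun u v => (u.1 = v.1 ∧ (u.2 : ℕ) < (v.2 : ℕ)) ∨ (u.1 ≠ v.1 ∧ modArc occ u.1 v.1)

/-- The set of vertices of a module. -/
def mset {n m s₁ s₂ : ℕ} (M : ModName n m) : Set (Vtx n m s₁ s₂) := {v | v.1 = M}

/-- The set of vertices of group `i`: `A_i ∪ B_i ∪ C_i ∪ D_i ∪ E_i ∪ F_i`. -/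
def gset {n m s₁ s₂ : ℕ} (i : Fin n) : Set (Vtx n m s₁ s₂) := {v | grp? v.1 = some i}

/-- The sink of the transitive tournament induced by the module `F_n`. -/
def fnSink (n m s₁ s₂ : ℕ) (hn : 0 < n) (hs₁ : 0 < s₁) : Vtx n m s₁ s₂ :=
  ⟨.F ⟨n - 1, Nat.sub_lt hn one_pos⟩, ⟨s₁ - 1, Nat.sub_lt hs₁ one_pos⟩⟩

/-- The feedback arc set implied by an ordering `r`. -/
def fasSet {V : Type*} (A r : V → V → Prop) : Set (V × V) := {p | A p.1 p.2 ∧ r p.2 p.1}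

/-- `r` is an optimal ordering: a strict linear order whose implied feedback arc set
has minimum size. -/
def IsOptimalOrder {V : Type*} (A r : V → V → Prop) : Prop :=
  IsStrictTotalOrder V r ∧
    ∀ r' : V → V → Prop, IsStrictTotalOrder V r' → (fasSet A r).ncard ≤ (fasSet A r').ncard

/-- `r` places `v` last. -/
def PlacesLast {V : Type*} (r : V → V → Prop) (v : V) : Prop := ∀ u, u ≠ v → r u v

/-- `v` is a Slater winner: some optimal order places `v` last. -/
def SlaterWinner {V : Type*} (A : V → V → Prop) (v : V) : Prop :=
  ∃ r : V → V → Prop, IsOptimalOrder A r ∧ PlacesLast r v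

/-- The assignment `σ` satisfies clause `c_j`. -/
def SatClause {n m : ℕ} (occ : Fin n → Fin m → Option Bool) (σ : Fin n → Bool)
    (j : Fin m) : Prop :=
  ∃ i : Fin n, (occ i j = some true ∧ σ i = true) ∨ (occ i j = some false ∧ σ i = false)

/-- The assignment `σ` satisfies `φ`. -/
def Sat {n m : ℕ} (occ : Fin n → Fin m → Option Bool) (σ : Fin n → Bool) : Prop :=
  ∀ j : Fin m, SatClause occ σ j

/-- The weight of a truth assignment: the number of variables set to `true`. -/
def wt {n : ℕ} (σ : Fin n → Bool) : ℕ := (Finset.univ.filter (fun i => σ i = true)).card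

/-- Every element of `S` comes before every element of `S'` in the order `r`. -/
def Before {V : Type*} (r : V → V → Prop) (S S' : Set V) : Prop := ∀ u ∈ S, ∀ v ∈ S', r u v

/-- `S` is contiguous in the ordering `r`. -/
def Contig {V : Type*} (r : V → V → Prop) (S : Set V) : Prop :=
  ¬ ∃ x ∈ S, ∃ y ∈ S, ∃ z, z ∉ S ∧ r x z ∧ r z y

/-- A linear order on the vertices of `T_φ` is structured if every module is contiguous,
groups appear in increasing order, within each group `A_i ≺ B_i ≺ C_i` come before
`D_i ∪ E_i ∪ F_i`, and the last three modules appear in one of the cyclic orders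
`D_i ≺ E_i ≺ F_i`, `E_i ≺ F_i ≺ D_i`, `F_i ≺ D_i ≺ E_i`. -/
def Structured {n m s₁ s₂ : ℕ} (r : Vtx n m s₁ s₂ → Vtx n m s₁ s₂ → Prop) : Prop :=
  (∀ M : ModName n m, Contig r (mset M)) ∧
  (∀ i i' : Fin n, i < i' → Before r (gset i) (gset i')) ∧
  (∀ i : Fin n,
    Before r (mset (.A i)) (mset (.B i)) ∧
    Before r (mset (.B i)) (mset (.C i)) ∧
    Before r (mset (.A i) ∪ mset (.B i) ∪ mset (.C i))
      (mset (.D i) ∪ mset (.E i) ∪ mset (.F i))) ∧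
  (∀ i : Fin n,
    (Before r (mset (.D i)) (mset (.E i)) ∧ Before r (mset (.E i)) (mset (.F i))) ∨
    (Before r (mset (.E i)) (mset (.F i)) ∧ Before r (mset (.F i)) (mset (.D i))) ∨
    (Before r (mset (.F i)) (mset (.D i)) ∧ Before r (mset (.D i)) (mset (.E i))))

/-- `σ` is the assignment extracted from the structured order `r`: `x_i` is set to true
iff `D_i ≺ E_i ≺ F_i`. -/
def Extracted {n m s₁ s₂ : ℕ} (r : Vtx n m s₁ s₂ → Vtx n m s₁ s₂ → Prop)
    (σ : Fin n → Bool) : Prop :=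
  ∀ i : Fin n, σ i = true ↔
    (Before r (mset (.D i)) (mset (.E i)) ∧ Before r (mset (.E i)) (mset (.F i)))

namespace Sl

open Classical in
/-- Weight of a pair of modules if it is a back arc for `q`. -/
noncomputable def bw {n m : ℕ} (s₁ s₂ : ℕ) (occ : Fin n → Fin m → Option Bool)
    (q : ModName n m → ModName n m → Prop) (M M' : ModName n m) : ℕ :=
  if modArc occ M M' ∧ q M' M then msize n m s₁ s₂ M * msize n m s₁ s₂ M' else 0

/-- Weighted cost of an order on the modules. -/
noncomputable def wc {n m : ℕ} (s₁ s₂ : ℕ) (occ : Fin n → Fin m → Option Bool)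
    (q : ModName n m → ModName n m → Prop) : ℕ :=
  ∑ M, ∑ M', bw s₁ s₂ occ q M M'

/-- Averaging over choice functions. -/
lemma avg_pair {ι : Type*} [Fintype ι] [DecidableEq ι] (w : ι → ℕ) (M M' : ι) (h : M ≠ M')
    (g : Fin (w M) → Fin (w M') → ℕ) :
    (∑ f : (∀ x, Fin (w x)), g (f M) (f M')) * (w M * w M') =
      Fintype.card (∀ x, Fin (w x)) * ∑ a, ∑ b, g a b := by
  let S : ((∀ x, Fin (w x)) × (Fin (w M) × Fin (w M'))) →
      ((∀ x, Fin (w x)) × (Fin (w M) × Fin (w M'))) := fun p =>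
    (Function.update (Function.update p.1 M p.2.1) M' p.2.2, (p.1 M, p.1 M'))
  have hS : Function.Involutive S := by
    rintro ⟨f, a, b⟩
    simp only [S]
    refine Prod.ext ?_ (Prod.ext ?_ ?_)
    · funext x
      by_cases h1 : x = M'
      · subst h1; simp
      · by_cases h2 : x = M
        · subst h2; simp [h1]
        · simp [h1, h2]
    · simp [h]
    · simp
  have h1 : ∑ p : ((∀ x, Fin (w x)) × (Fin (w M) × Fin (w M'))), g (p.1 M) (p.1 M') =
      ∑ p : ((∀ x, Fin (w x)) × (Fin (w M) × Fin (w M'))), g p.2.1 p.2.2 :=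
    Fintype.sum_equiv hS.toPerm _ _ (fun p => rfl)
  rw [Fintype.sum_prod_type, Fintype.sum_prod_type] at h1
  simp only [Finset.sum_const, Finset.card_univ, Fintype.card_prod, Fintype.card_fin,
    smul_eq_mul, Fintype.sum_prod_type] at h1
  rw [← h1, ← Finset.mul_sum, mul_comm]

/-- The module order induced by representatives. -/
def qf {n m s₁ s₂ : ℕ} (r : Vtx n m s₁ s₂ → Vtx n m s₁ s₂ → Prop)
    (f : ∀ M, Fin (msize n m s₁ s₂ M)) (M M' : ModName n m) : Prop :=
  r ⟨M, f M⟩ ⟨M', f M'⟩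

lemma qf_sto {n m s₁ s₂ : ℕ} (r : Vtx n m s₁ s₂ → Vtx n m s₁ s₂ → Prop)
    (hr : IsStrictTotalOrder _ r) (f : ∀ M, Fin (msize n m s₁ s₂ M)) :
    IsStrictTotalOrder _ (qf r f) where
  trichotomous M M' h1 h2 := by
    have := hr.trichotomous ⟨M, f M⟩ ⟨M', f M'⟩ h1 h2
    exact congrArg Sigma.fst this
  irrefl M := hr.irrefl _
  trans a b c h1 h2 := hr.trans _ _ _ h1 h2

open Classical in
lemma ncard_fas {V : Type*} [Fintype V] (A r : V → V → Prop) :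
    (fasSet A r).ncard = ∑ u, ∑ v, if A u v ∧ r v u then 1 else 0 := by
  have h : fasSet A r = ((Finset.univ.filter fun p : V × V => A p.1 p.2 ∧ r p.2 p.1 :
      Finset (V × V)) : Set (V × V)) := by
    ext p
    rw [Finset.mem_coe, Finset.mem_filter]
    exact ⟨fun h => ⟨Finset.mem_univ _, h⟩, fun h => h.2⟩
  rw [h, Set.ncard_coe_finset, ← Fintype.sum_prod_type', ← Finset.card_filter]

lemma avg {n m s₁ s₂ : ℕ} (occ : Fin n → Fin m → Option Bool)
    (r : Vtx n m s₁ s₂ → Vtx n m s₁ s₂ → Prop) (hr : IsStrictTotalOrder _ r) :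
    ∑ f : (∀ M, Fin (msize n m s₁ s₂ M)), wc s₁ s₂ occ (qf r f) ≤
      Fintype.card (∀ M, Fin (msize n m s₁ s₂ M)) * (fasSet (arc occ) r).ncard := by
  classical
  rw [ncard_fas]
  simp only [wc]
  rw [Finset.sum_comm, Fintype.sum_sigma, Finset.mul_sum]
  refine Finset.sum_le_sum fun M _ => ?_
  simp_rw [Fintype.sum_sigma]
  rw [Finset.sum_comm, Finset.sum_comm (s := (Finset.univ : Finset (Fin (msize n m s₁ s₂ M)))),
    Finset.mul_sum]
  refine Finset.sum_le_sum fun M' _ => ?_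
  by_cases h : M = M'
  · subst h
    have : ∀ f : (∀ M, Fin (msize n m s₁ s₂ M)), bw s₁ s₂ occ (qf r f) M M = 0 := by
      intro f
      simp only [bw]
      rw [if_neg]
      rintro ⟨_, h⟩
      exact hr.irrefl _ h
    simp [this]
  · rw [← avg_pair (msize n m s₁ s₂) M M' h, Finset.sum_mul]
    refine Finset.sum_le_sum fun f _ => ?_
    simp only [bw, qf, arc]
    simp only [ne_eq, h, false_and, not_false_eq_true, true_and, false_or, ite_mul, one_mul,
      zero_mul]
    exact le_of_eq (by congr)

/-- Blow-up of a module order. -/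
def blow {n m : ℕ} (s₁ s₂ : ℕ) (q : ModName n m → ModName n m → Prop)
    (u v : Vtx n m s₁ s₂) : Prop :=
  q u.1 v.1 ∨ (u.1 = v.1 ∧ (u.2 : ℕ) < (v.2 : ℕ))

lemma blow_sto {n m s₁ s₂ : ℕ} (q : ModName n m → ModName n m → Prop)
    (hq : IsStrictTotalOrder _ q) : IsStrictTotalOrder _ (blow s₁ s₂ q) where
  trichotomous := by
    rintro ⟨M, a⟩ ⟨M', b⟩ h1 h2
    simp only [blow, not_or] at h1 h2
    have := hq.trichotomous M M' h1.1 h2.1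
    subst this
    have : a = b := by
      apply Fin.ext
      have := h1.2; have := h2.2
      simp at *
      omega
    rw [this]
  irrefl := by
    rintro ⟨M, a⟩ (h | h)
    · exact hq.irrefl _ h
    · simp at h
  trans := by
    rintro ⟨M, a⟩ ⟨M', b⟩ ⟨M'', c⟩ (h1 | ⟨h1, h1'⟩) (h2 | ⟨h2, h2'⟩)
    · exact Or.inl (hq.trans _ _ _ h1 h2)
    · simp only at h2; subst h2; exact Or.inl h1
    · simp only at h1; subst h1; exact Or.inl h2
    · simp only at h1 h2; subst h1; subst h2
      exact Or.inr ⟨rfl, lt_trans h1' h2'⟩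

lemma blow_cost {n m s₁ s₂ : ℕ} (occ : Fin n → Fin m → Option Bool)
    (q : ModName n m → ModName n m → Prop) (hq : IsStrictTotalOrder _ q) :
    (fasSet (arc occ) (blow s₁ s₂ q)).ncard = wc s₁ s₂ occ q := by
  classical
  rw [ncard_fas, Fintype.sum_sigma, wc]
  refine Finset.sum_congr rfl fun M _ => ?_
  simp_rw [Fintype.sum_sigma]
  rw [Finset.sum_comm]
  refine Finset.sum_congr rfl fun M' _ => ?_
  have key : ∀ (a : Fin (msize n m s₁ s₂ M)) (b : Fin (msize n m s₁ s₂ M')),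
      (arc occ (⟨M, a⟩ : Vtx n m s₁ s₂) ⟨M', b⟩ ∧ blow s₁ s₂ q ⟨M', b⟩ ⟨M, a⟩) ↔
        (modArc occ M M' ∧ q M' M) := by
    intro a b
    simp only [arc, blow]
    by_cases h : M = M'
    · subst h
      have := hq.irrefl M
      simp [this]
      intro h; omega
    · have h' : ¬ M' = M := fun e => h e.symm
      simp [h, h']
  simp_rw [key, bw]
  split_ifs <;> simp

end Sl
namespace Sl

/-- The variable module of group `i` and rank `k`. -/
def vm {n m : ℕ} (i : Fin n) (k : Fin 6) : ModName n m :=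
  match k with
  | 0 => .A i
  | 1 => .B i
  | 2 => .C i
  | 3 => .D i
  | 4 => .E i
  | 5 => .F i

lemma grp_vm {n m : ℕ} (i : Fin n) (k : Fin 6) : grp? (vm i k : ModName n m) = some i := by
  fin_cases k <;> rfl

lemma clause_vm {n m : ℕ} (i : Fin n) (k : Fin 6) : clause? (vm i k : ModName n m) = none := by
  fin_cases k <;> rfl

lemma rk_vm {n m : ℕ} (i : Fin n) (k : Fin 6) : rk (vm i k : ModName n m) = (k : ℕ) := by
  fin_cases k <;> rfl

lemma grp_T {n m : ℕ} (j : Fin m) : grp? (.T j : ModName n m) = none := rfl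

lemma clause_T {n m : ℕ} (j : Fin m) : clause? (.T j : ModName n m) = some j := rfl

/-- Modules as a sum type. -/
def eqv (n m : ℕ) : (Fin n × Fin 6) ⊕ Fin m ≃ ModName n m where
  toFun := Sum.elim (fun p => vm p.1 p.2) .T
  invFun
    | .A i => .inl (i, 0)
    | .B i => .inl (i, 1)
    | .C i => .inl (i, 2)
    | .D i => .inl (i, 3)
    | .E i => .inl (i, 4)
    | .F i => .inl (i, 5)
    | .T j => .inr j
  left_inv := by
    rintro (⟨i, k⟩ | j)
    · fin_cases k <;> rfl
    · rfl
  right_inv := by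
    rintro (i | i | i | i | i | i | j) <;> rfl

lemma vm_inj {n m : ℕ} {i i' : Fin n} {k k' : Fin 6} (h : (vm i k : ModName n m) = vm i' k') :
    i = i' ∧ k = k' := by
  have h1 := congrArg grp? h
  have h2 := congrArg rk h
  rw [grp_vm, grp_vm] at h1
  rw [rk_vm, rk_vm] at h2
  exact ⟨Option.some.inj h1, Fin.ext h2⟩

lemma vm_ne_T {n m : ℕ} {i : Fin n} {k : Fin 6} {j : Fin m} : (vm i k : ModName n m) ≠ .T j := by
  intro h
  have h1 := congrArg grp? h
  rw [grp_vm] at h1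
  simp [grp?] at h1

lemma mod_cases {n m : ℕ} (M : ModName n m) : (∃ i k, M = vm i k) ∨ ∃ j, M = .T j := by
  obtain ⟨x, rfl⟩ := (eqv n m).surjective M
  rcases x with ⟨i, k⟩ | j
  · exact Or.inl ⟨i, k, rfl⟩
  · exact Or.inr ⟨j, rfl⟩

lemma sum_mod {n m : ℕ} (f : ModName n m → ℕ) :
    ∑ M, f M = ∑ p : Fin n × Fin 6, f (vm p.1 p.2) + ∑ j, f (.T j) := by
  rw [← (eqv n m).sum_comp, Fintype.sum_sum_type]
  rfl

lemma modArc_vv {n m : ℕ} (occ : Fin n → Fin m → Option Bool) (i i' : Fin n) (k k' : Fin 6) :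
    modArc occ (vm i k) (vm i' k') ↔ (i < i' ∨ (i = i' ∧ (((k : ℕ) < (k' : ℕ) ∧
      ¬((k : ℕ) = 3 ∧ (k' : ℕ) = 5)) ∨ ((k : ℕ) = 5 ∧ (k' : ℕ) = 3)))) := by
  simp [modArc, grp_vm, clause_vm, rk_vm]

lemma modArc_tv {n m : ℕ} (occ : Fin n → Fin m → Option Bool) (i : Fin n) (j : Fin m)
    (k : Fin 6) : modArc occ (.T j) (vm i k) ↔ tBeats (occ i j) (k : ℕ) := by
  simp [modArc, grp_vm, clause_vm, rk_vm, grp_T, clause_T]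

lemma modArc_vt {n m : ℕ} (occ : Fin n → Fin m → Option Bool) (i : Fin n) (j : Fin m)
    (k : Fin 6) : modArc occ (vm i k) (.T j) ↔ ¬ tBeats (occ i j) (k : ℕ) := by
  simp [modArc, grp_vm, clause_vm, rk_vm, grp_T, clause_T]

lemma wc_split {n m : ℕ} (s₁ s₂ : ℕ) (occ : Fin n → Fin m → Option Bool)
    (q : ModName n m → ModName n m → Prop) :
    wc s₁ s₂ occ q =
      ∑ p : (Fin n × Fin 6) × (Fin n × Fin 6), bw s₁ s₂ occ q (vm p.1.1 p.1.2) (vm p.2.1 p.2.2) +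
      ∑ j, ∑ i, ∑ k, (bw s₁ s₂ occ q (.T j) (vm i k) + bw s₁ s₂ occ q (vm i k) (.T j)) +
      ∑ j, ∑ j', bw s₁ s₂ occ q (.T j) (.T j') := by
  rw [wc, sum_mod]
  simp_rw [sum_mod, Finset.sum_add_distrib]
  rw [Finset.sum_comm (s := (Finset.univ : Finset (Fin n × Fin 6)))
    (t := (Finset.univ : Finset (Fin m)))]
  rw [Fintype.sum_prod_type (α₁ := Fin n × Fin 6) (α₂ := Fin n × Fin 6)]
  simp only [Fintype.sum_prod_type]
  ring

/-- Boolean version of `tBeats`. -/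
def tb : Option Bool → Fin 6 → Bool
  | none, k => k == 0 || k == 1 || k == 2
  | some true, k => k == 0 || k == 1 || k == 5
  | some false, k => k == 0 || k == 2 || k == 3

lemma tb_iff (o : Option Bool) (k : Fin 6) : tBeats o (k : ℕ) ↔ tb o k = true := by
  rcases o with _ | _ | _ <;> fin_cases k <;> simp [tBeats, tb]

/-- Number of bad ranks. -/
def cnt (o : Option Bool) (t : Fin 6 → Bool) : ℕ := ∑ k, if tb o k = t k then 1 else 0

lemma cnt_aux : ∀ (o : Option Bool) (t0 t1 t2 t3 t4 t5 : Bool),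
    (t1 → t0) → (t2 → t1) → (t3 → t2) → (t4 → t2) → (t5 → t2) →
    (((t4 → t3) ∧ (t5 → t4)) → (3 ≤ cnt o ![t0, t1, t2, t3, t4, t5] ∨
      (2 ≤ cnt o ![t0, t1, t2, t3, t4, t5] ∧ o = some true ∧ t0 ∧ !t5))) ∧
    (((t5 → t4) ∧ (t3 → t5)) → (3 ≤ cnt o ![t0, t1, t2, t3, t4, t5] ∨
      (2 ≤ cnt o ![t0, t1, t2, t3, t4, t5] ∧ o = some false ∧ t0 ∧ !t3))) ∧
    (((t3 → t5) ∧ (t4 → t3)) → 3 ≤ cnt o ![t0, t1, t2, t3, t4, t5]) := by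
  intro o t0 t1 t2 t3 t4 t5
  have hc : ∀ o, cnt o ![t0, t1, t2, t3, t4, t5] = (if tb o 0 = t0 then 1 else 0) +
      (if tb o 1 = t1 then 1 else 0) + (if tb o 2 = t2 then 1 else 0) +
      (if tb o 3 = t3 then 1 else 0) + (if tb o 4 = t4 then 1 else 0) +
      (if tb o 5 = t5 then 1 else 0) := by
    intro o
    rw [cnt, Fin.sum_univ_six]
    rfl
  rw [hc]
  cases t0 <;> cases t1 <;> cases t2 <;> cases t3 <;> cases t4 <;> cases t5 <;>
    rcases o with _ | _ | _ <;> simp [tb]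

/-- Extra weight of `E_i`. -/
def ee {n : ℕ} (i : Fin n) : ℕ := if (i : ℕ) = n - 1 then 3 else 2

/-- Extra cost of an assignment. -/
def ex {n : ℕ} (σ : Fin n → Bool) : ℕ := ∑ i, if σ i = true then 0 else ee i

lemma size_vm {n m s₁ s₂ : ℕ} (i : Fin n) (k : Fin 6) :
    msize n m s₁ s₂ (vm i k) = s₁ + if k = 4 then ee i else 0 := by
  fin_cases k <;> simp [vm, msize, ee]
  split_ifs <;> rfl

lemma size_T {n m s₁ s₂ : ℕ} (j : Fin m) : msize n m s₁ s₂ (.T j) = s₂ := rfl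

lemma ex_eq {n : ℕ} (hn : 0 < n) (σ : Fin n → Bool) :
    ex σ + 2 * wt σ = 2 * n + if σ ⟨n - 1, Nat.sub_lt hn one_pos⟩ = true then 0 else 1 := by
  have h1 : (if σ ⟨n - 1, Nat.sub_lt hn one_pos⟩ = true then 0 else 1) =
      ∑ i : Fin n, if i = ⟨n - 1, Nat.sub_lt hn one_pos⟩ then
        (if σ i = true then 0 else 1) else 0 := by
    simp
  have h2 : 2 * n = ∑ i : Fin n, 2 := by simp [mul_comm]
  rw [h1, h2, wt, ex, Finset.card_filter, Finset.mul_sum, ← Finset.sum_add_distrib,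
    ← Finset.sum_add_distrib]
  refine Finset.sum_congr rfl fun i _ => ?_
  simp only [ee, Fin.ext_iff]
  split_ifs <;> simp

lemma ex_le {n : ℕ} (σ : Fin n → Bool) : ex σ ≤ 3 * n := by
  have : 3 * n = ∑ i : Fin n, 3 := by simp [mul_comm]
  rw [this, ex]
  refine Finset.sum_le_sum fun i _ => ?_
  simp only [ee]
  split_ifs <;> simp

end Sl
namespace Sl

lemma sto_of_not {α : Type*} {q : α → α → Prop} (hq : IsStrictTotalOrder _ q) {a b : α}
    (hne : a ≠ b) (h : ¬ q b a) : q a b := by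
  by_contra h'
  exact hne (hq.trichotomous a b h' h)

lemma struct {n m : ℕ} (s₁ s₂ : ℕ) (occ : Fin n → Fin m → Option Bool)
    (q : ModName n m → ModName n m → Prop) (hq : IsStrictTotalOrder _ q)
    (hlt : wc s₁ s₂ occ q < (n + 1) * s₁ ^ 2) :
    ∃ z : Fin n → Fin 6 × Fin 6, (∀ i, z i = (3, 4) ∨ z i = (4, 5) ∨ z i = (5, 3)) ∧
      ∀ i k i' k', (modArc occ (vm i k) (vm i' k') ∧ q (vm i' k') (vm i k)) ↔
        (i = i' ∧ z i = (k, k')) := by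
  classical
  have htri : ∀ i : Fin n, ∃ z : Fin 6 × Fin 6, (z = (3, 4) ∨ z = (4, 5) ∨ z = (5, 3)) ∧
      q (vm i z.2) (vm i z.1) := by
    intro i
    by_cases h1 : q (vm i 4) (vm i 3)
    · exact ⟨(3, 4), by simp, h1⟩
    by_cases h2 : q (vm i 5) (vm i 4)
    · exact ⟨(4, 5), by simp, h2⟩
    have h1' := sto_of_not hq (fun h => by simpa using (vm_inj h).2) h1
    have h2' := sto_of_not hq (fun h => by simpa using (vm_inj h).2) h2
    exact ⟨(5, 3), by simp, hq.trans _ _ _ h1' h2'⟩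
  choose z hz hzq using htri
  have harc : ∀ i, modArc occ (vm i (z i).1) (vm i (z i).2) := by
    intro i
    rw [modArc_vv]
    rcases hz i with h | h | h <;> simp [h]
  let S : Finset ((Fin n × Fin 6) × (Fin n × Fin 6)) := Finset.univ.filter fun p =>
    modArc occ (vm p.1.1 p.1.2) (vm p.2.1 p.2.2) ∧ q (vm p.2.1 p.2.2) (vm p.1.1 p.1.2)
  have hS : S.card * s₁ ^ 2 ≤ wc s₁ s₂ occ q := by
    rw [wc_split, Finset.card_filter, Finset.sum_mul, add_assoc]
    refine le_trans (Finset.sum_le_sum fun p _ => ?_) (Nat.le_add_right _ _)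
    rw [bw]
    split_ifs with h
    · rw [one_mul, sq, size_vm, size_vm]
      exact Nat.mul_le_mul (Nat.le_add_right _ _) (Nat.le_add_right _ _)
    · simp
  have hcard : S.card ≤ n := by
    by_contra hc
    have : (n + 1) * s₁ ^ 2 ≤ S.card * s₁ ^ 2 := Nat.mul_le_mul_right _ (by omega)
    omega
  let g : Fin n → ((Fin n × Fin 6) × (Fin n × Fin 6)) := fun i => ((i, (z i).1), (i, (z i).2))
  have hginj : Function.Injective g := by
    intro i i' h
    exact congrArg (fun p => p.1.1) h
  have hsub : Finset.univ.image g ⊆ S := by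
    intro p hp
    obtain ⟨i, _, rfl⟩ := Finset.mem_image.1 hp
    exact Finset.mem_filter.2 ⟨Finset.mem_univ _, harc i, hzq i⟩
  have heq : Finset.univ.image g = S := by
    apply Finset.eq_of_subset_of_card_le hsub
    rw [Finset.card_image_of_injective _ hginj]
    simpa using hcard
  refine ⟨z, hz, fun i k i' k' => ⟨fun h => ?_, ?_⟩⟩
  · have : ((i, k), (i', k')) ∈ S := Finset.mem_filter.2 ⟨Finset.mem_univ _, h⟩
    rw [← heq] at this
    obtain ⟨l, _, hl⟩ := Finset.mem_image.1 this
    simp only [g, Prod.mk.injEq] at hl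
    obtain ⟨⟨rfl, rfl⟩, rfl, rfl⟩ := hl
    exact ⟨rfl, rfl⟩
  · rintro ⟨rfl, h⟩
    have h1 := harc i
    have h2 := hzq i
    rw [h] at h1 h2
    exact ⟨h1, h2⟩

/-- Conclusion of `struct`. -/
def Str {n m : ℕ} (occ : Fin n → Fin m → Option Bool)
    (q : ModName n m → ModName n m → Prop) (z : Fin n → Fin 6 × Fin 6) : Prop :=
  (∀ i, z i = (3, 4) ∨ z i = (4, 5) ∨ z i = (5, 3)) ∧
      ∀ i k i' k', (modArc occ (vm i k) (vm i' k') ∧ q (vm i' k') (vm i k)) ↔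
        (i = i' ∧ z i = (k, k'))

lemma Str.fwd {n m : ℕ} {occ : Fin n → Fin m → Option Bool}
    {q : ModName n m → ModName n m → Prop} {z : Fin n → Fin 6 × Fin 6} (h : Str occ q z)
    (hq : IsStrictTotalOrder _ q) {i i' : Fin n} {k k' : Fin 6}
    (ha : modArc occ (vm i k) (vm i' k')) (hz : ¬ (i = i' ∧ z i = (k, k'))) :
    q (vm i k) (vm i' k') := by
  apply sto_of_not hq
  · intro he
    obtain ⟨rfl, rfl⟩ := vm_inj he
    rw [modArc_vv] at ha
    simp at ha
    omega
  · intro hb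
    exact hz ((h.2 _ _ _ _).1 ⟨ha, hb⟩)

lemma Str.vv {n m : ℕ} {occ : Fin n → Fin m → Option Bool} (s₁ s₂ : ℕ)
    {q : ModName n m → ModName n m → Prop} {z : Fin n → Fin 6 × Fin 6} (h : Str occ q z) :
    n * s₁ ^ 2 + ex (fun i => decide (z i = (5, 3))) * s₁ ≤
      ∑ p : (Fin n × Fin 6) × (Fin n × Fin 6),
        bw s₁ s₂ occ q (vm p.1.1 p.1.2) (vm p.2.1 p.2.2) := by
  classical
  let g : Fin n ↪ ((Fin n × Fin 6) × (Fin n × Fin 6)) :=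
    ⟨fun i => ((i, (z i).1), (i, (z i).2)), fun i i' h => congrArg (fun p => p.1.1) h⟩
  have h1 : ∑ i, bw s₁ s₂ occ q (vm i (z i).1) (vm i (z i).2) ≤
      ∑ p : (Fin n × Fin 6) × (Fin n × Fin 6),
        bw s₁ s₂ occ q (vm p.1.1 p.1.2) (vm p.2.1 p.2.2) := by
    have := Finset.sum_map Finset.univ g
      (fun p => bw s₁ s₂ occ q (vm p.1.1 p.1.2) (vm p.2.1 p.2.2))
    refine le_trans (le_of_eq this.symm) ?_
    exact Finset.sum_le_univ_sum_of_nonneg (fun _ => Nat.zero_le _)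
  refine le_trans (le_of_eq ?_) h1
  have : n * s₁ ^ 2 = ∑ i : Fin n, s₁ ^ 2 := by simp
  rw [this, ex, Finset.sum_mul, ← Finset.sum_add_distrib]
  refine Finset.sum_congr rfl fun i _ => ?_
  rw [bw, if_pos ((h.2 i (z i).1 i (z i).2).2 ⟨rfl, rfl⟩), size_vm, size_vm]
  rcases h.1 i with hz | hz | hz <;> simp [hz] <;> ring

open Classical in
/-- Which modules of group `i` come before `T_j`. -/
noncomputable def tt {n m : ℕ} (q : ModName n m → ModName n m → Prop) (i : Fin n) (j : Fin m)
    (k : Fin 6) : Bool := decide (q (vm i k) (.T j))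

lemma tv_bound {n m : ℕ} {occ : Fin n → Fin m → Option Bool} (s₁ s₂ : ℕ)
    {q : ModName n m → ModName n m → Prop} (hq : IsStrictTotalOrder _ q) (i : Fin n) (j : Fin m) :
    s₁ * s₂ * cnt (occ i j) (tt q i j) ≤
      ∑ k, (bw s₁ s₂ occ q (.T j) (vm i k) + bw s₁ s₂ occ q (vm i k) (.T j)) := by
  classical
  rw [cnt, Finset.mul_sum]
  refine Finset.sum_le_sum fun k _ => ?_
  simp only [bw, modArc_tv, modArc_vt, tb_iff, size_vm, size_T, tt]
  have h1 : s₁ * s₂ ≤ s₂ * (s₁ + if k = 4 then ee i else 0) := by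
    rw [mul_comm]; exact Nat.mul_le_mul_left _ (Nat.le_add_right _ _)
  by_cases hb : tb (occ i j) k = true
  · by_cases hqq : q (vm i k) (.T j)
    · simpa [hb, hqq] using h1
    · simp [hb, hqq]
  · by_cases hqq : q (vm i k) (.T j)
    · simp [hb, hqq]
    · have h2 : q (.T j) (vm i k) := sto_of_not hq vm_ne_T.symm hqq
      rw [mul_comm s₂] at h1
      simpa [hb, hqq, h2] using h1

/-- `T_j` sits in group `i` at the satisfied literal. -/
def Good {n m : ℕ} (occ : Fin n → Fin m → Option Bool)
    (q : ModName n m → ModName n m → Prop) (z : Fin n → Fin 6 × Fin 6) (i : Fin n) (j : Fin m) :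
    Prop :=
  q (vm i 0) (.T j) ∧ ((occ i j = some true ∧ z i = (5, 3) ∧ q (.T j) (vm i 5)) ∨
    (occ i j = some false ∧ z i = (3, 4) ∧ q (.T j) (vm i 3)))

lemma Str.cnt {n m : ℕ} {occ : Fin n → Fin m → Option Bool}
    {q : ModName n m → ModName n m → Prop} {z : Fin n → Fin 6 × Fin 6} (h : Str occ q z)
    (hq : IsStrictTotalOrder _ q) (i : Fin n) (j : Fin m) :
    3 ≤ cnt (occ i j) (tt q i j) ∨ (2 ≤ Sl.cnt (occ i j) (tt q i j) ∧ Good occ q z i j) := by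
  classical
  have htt : tt q i j = ![tt q i j 0, tt q i j 1, tt q i j 2, tt q i j 3, tt q i j 4, tt q i j 5] := by
    funext k
    fin_cases k <;> rfl
  have imp : ∀ k k' : Fin 6, modArc occ (vm i k) (vm i k') → z i ≠ (k, k') →
      (tt q i j k' = true → tt q i j k = true) := by
    intro k k' h1 h2 h3
    simp only [tt, decide_eq_true_eq] at h3 ⊢
    exact hq.trans _ _ _ (h.fwd hq h1 (fun h => h2 h.2)) h3
  have hT : ∀ k, (!tt q i j k) = true → q (.T j) (vm i k) := by
    intro k hk
    simp only [tt, Bool.not_eq_true', decide_eq_false_iff_not] at hk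
    exact sto_of_not hq vm_ne_T.symm hk
  have hT' : ∀ k, tt q i j k = true → q (vm i k) (.T j) := by
    intro k hk
    simpa [tt] using hk
  have hz := h.1 i
  have aux := cnt_aux (occ i j) (tt q i j 0) (tt q i j 1) (tt q i j 2) (tt q i j 3) (tt q i j 4)
    (tt q i j 5)
    (imp 0 1 (by rw [modArc_vv]; simp) (by rcases hz with e | e | e <;> simp [e]))
    (imp 1 2 (by rw [modArc_vv]; simp) (by rcases hz with e | e | e <;> simp [e]))
    (imp 2 3 (by rw [modArc_vv]; simp) (by rcases hz with e | e | e <;> simp [e]))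
    (imp 2 4 (by rw [modArc_vv]; simp) (by rcases hz with e | e | e <;> simp [e]))
    (imp 2 5 (by rw [modArc_vv]; simp) (by rcases hz with e | e | e <;> simp [e]))
  rw [← htt] at aux
  have i34 := imp 3 4 (by rw [modArc_vv]; simp)
  have i45 := imp 4 5 (by rw [modArc_vv]; simp)
  have i53 := imp 5 3 (by rw [modArc_vv]; simp)
  rcases hz with e | e | e
  · rcases aux.2.1 ⟨i45 (by simp [e]), i53 (by simp [e])⟩ with h3 | ⟨h2, ho, h0, h3⟩
    · exact Or.inl h3
    · exact Or.inr ⟨h2, hT' _ h0, Or.inr ⟨ho, e, hT _ h3⟩⟩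
  · exact Or.inl (aux.2.2 ⟨i53 (by simp [e]), i34 (by simp [e])⟩)
  · rcases aux.1 ⟨i34 (by simp [e]), i45 (by simp [e])⟩ with h3 | ⟨h2, ho, h0, h3⟩
    · exact Or.inl h3
    · exact Or.inr ⟨h2, hT' _ h0, Or.inl ⟨ho, e, hT _ h3⟩⟩

lemma Good.ex_after {n m : ℕ} {occ : Fin n → Fin m → Option Bool}
    {q : ModName n m → ModName n m → Prop} {z : Fin n → Fin 6 × Fin 6} {i : Fin n} {j : Fin m}
    (h : Good occ q z i j) : ∃ k, q (.T j) (vm i k) := by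
  rcases h.2 with h | h
  · exact ⟨_, h.2.2⟩
  · exact ⟨_, h.2.2⟩

lemma Good.unique {n m : ℕ} {occ : Fin n → Fin m → Option Bool}
    {q : ModName n m → ModName n m → Prop} {z : Fin n → Fin 6 × Fin 6} (hs : Str occ q z)
    (hq : IsStrictTotalOrder _ q) {i i' : Fin n} {j : Fin m}
    (h : Good occ q z i j) (h' : Good occ q z i' j) : ¬ i < i' := by
  intro hlt
  obtain ⟨k, hk⟩ := h.ex_after
  have h1 : q (vm i k) (vm i' 0) :=
    hs.fwd hq (by rw [modArc_vv]; exact Or.inl hlt) (fun h => hlt.ne h.1)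
  exact hq.irrefl _ (hq.trans _ _ _ (hq.trans _ _ _ hk h1) h'.1)

lemma Str.pj {n m : ℕ} {occ : Fin n → Fin m → Option Bool}
    {q : ModName n m → ModName n m → Prop} {z : Fin n → Fin 6 × Fin 6} (h : Str occ q z)
    (hq : IsStrictTotalOrder _ q) (j : Fin m) :
    3 * n ≤ ∑ i, Sl.cnt (occ i j) (tt q i j) ∨
      (3 * n ≤ ∑ i, Sl.cnt (occ i j) (tt q i j) + 1 ∧ ∃ i, Good occ q z i j) := by
  classical
  have h3 : 3 * n = ∑ i : Fin n, 3 := by simp [mul_comm]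
  by_cases hg : ∃ i, Good occ q z i j
  · right
    refine ⟨?_, hg⟩
    obtain ⟨i0, hi0⟩ := hg
    have : 1 = ∑ i : Fin n, if i = i0 then 1 else 0 := by simp
    rw [this, ← Finset.sum_add_distrib, h3]
    refine Finset.sum_le_sum fun i _ => ?_
    rcases h.cnt hq i j with h | ⟨h2, hg⟩
    · omega
    · have : i = i0 := by
        have a := Good.unique ‹_› hq hg hi0
        have b := Good.unique ‹_› hq hi0 hg
        exact le_antisymm (not_lt.1 b) (not_lt.1 a)
      simp [this] at *
      omega
  · left
    rw [h3]
    refine Finset.sum_le_sum fun i _ => ?_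
    rcases h.cnt hq i j with h | ⟨h2, hg'⟩
    · exact h
    · exact absurd ⟨i, hg'⟩ hg

lemma Str.all_good {n m : ℕ} {occ : Fin n → Fin m → Option Bool}
    {q : ModName n m → ModName n m → Prop} {z : Fin n → Fin 6 × Fin 6} (h : Str occ q z)
    (hq : IsStrictTotalOrder _ q) (K : ℕ) (hK : K + 1 = 3 * n) :
    K * m ≤ ∑ j, ∑ i, Sl.cnt (occ i j) (tt q i j) ∧
    ((∑ j, ∑ i, Sl.cnt (occ i j) (tt q i j) ≤ K * m) → ∀ j, ∃ i, Good occ q z i j) := by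
  classical
  have hKm : K * m = ∑ j : Fin m, K := by simp [mul_comm]
  have hle : ∀ j ∈ Finset.univ, K ≤ ∑ i, Sl.cnt (occ i j) (tt q i j) := by
    intro j _
    rcases h.pj hq j with h | h <;> omega
  refine ⟨by rw [hKm]; exact Finset.sum_le_sum hle, fun hle' j => ?_⟩
  by_contra hg
  have : ∑ j : Fin m, K < ∑ j, ∑ i, Sl.cnt (occ i j) (tt q i j) := by
    refine Finset.sum_lt_sum hle ⟨j, Finset.mem_univ _, ?_⟩
    rcases h.pj hq j with h | h
    · omega
    · exact absurd h.2 hg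
  omega

lemma core {n m s₁ s₂ : ℕ} (hn : 0 < n) (occ : Fin n → Fin m → Option Bool)
    (hallF : ∀ j : Fin m, ∃ i : Fin n, occ i j = some false)
    (K sm : ℕ) (hK : K + 1 = 3 * n)
    (hineq1 : s₁ ^ 2 > K * m * s₁ * s₂ + 3 * n * s₁ + sm)
    (hineq2 : s₁ * s₂ > 3 * n * s₁ + sm)
    (hineq3 : s₁ > sm)
    (q : ModName n m → ModName n m → Prop) (hq : IsStrictTotalOrder _ q)
    (hub : ∀ σ, Sat occ σ →
      wc s₁ s₂ occ q ≤ n * s₁ ^ 2 + K * m * s₁ * s₂ + ex σ * s₁ + sm) :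
    ∃ σ : Fin n → Bool, Sat occ σ ∧ (∀ σ', Sat occ σ' → ex σ ≤ ex σ') ∧
      (σ ⟨n - 1, Nat.sub_lt hn one_pos⟩ = true ↔
        ∀ M, M ≠ .F ⟨n - 1, Nat.sub_lt hn one_pos⟩ → q M (.F ⟨n - 1, Nat.sub_lt hn one_pos⟩)) := by
  have hF : Sat occ (fun _ => false) := by
    intro j
    obtain ⟨i, hi⟩ := hallF j
    exact ⟨i, Or.inr ⟨hi, rfl⟩⟩
  have hb := hub _ hF
  have hex : ex (fun _ : Fin n => false) * s₁ ≤ 3 * n * s₁ := Nat.mul_le_mul_right _ (ex_le _)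
  obtain ⟨z, hz⟩ := struct s₁ s₂ occ q hq (by
    have : (n + 1) * s₁ ^ 2 = n * s₁ ^ 2 + s₁ ^ 2 := by ring
    omega)
  have hz : Str occ q z := hz
  set σ : Fin n → Bool := fun i => decide (z i = (5, 3)) with hσ
  have hvv := hz.vv s₁ s₂
  rw [← hσ] at hvv
  have htv : s₁ * s₂ * ∑ j, ∑ i, Sl.cnt (occ i j) (tt q i j) ≤
      ∑ j, ∑ i, ∑ k, (bw s₁ s₂ occ q (.T j) (vm i k) + bw s₁ s₂ occ q (vm i k) (.T j)) := by
    simp only [Finset.mul_sum (s := (Finset.univ : Finset (Fin m))),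
      Finset.mul_sum (s := (Finset.univ : Finset (Fin n)))]
    exact Finset.sum_le_sum fun j _ => Finset.sum_le_sum fun i _ => tv_bound s₁ s₂ hq i j
  have hsplit := wc_split s₁ s₂ occ q
  obtain ⟨hlow, hgood⟩ := hz.all_good hq K hK
  set N := ∑ j, ∑ i, Sl.cnt (occ i j) (tt q i j) with hN
  have hKms : K * m * s₁ * s₂ = s₁ * s₂ * (K * m) := by ring
  have hN' : N ≤ K * m := by
    by_contra hc
    have h1 : s₁ * s₂ * (K * m + 1) ≤ s₁ * s₂ * N := Nat.mul_le_mul_left _ (by omega)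
    rw [mul_add, mul_one] at h1
    omega
  have hg := hgood hN'
  have hlow' : s₁ * s₂ * (K * m) ≤ s₁ * s₂ * N := Nat.mul_le_mul_left _ hlow
  refine ⟨σ, ?_, ?_, ?_⟩
  · intro j
    obtain ⟨i, hi⟩ := hg j
    refine ⟨i, ?_⟩
    rcases hi.2 with h | h
    · exact Or.inl ⟨h.1, by simp [hσ, h.2.1]⟩
    · exact Or.inr ⟨h.1, by simp [hσ, h.2.1]⟩
  · intro σ' hσ'
    have hb' := hub σ' hσ'
    by_contra hc
    have : (ex σ' + 1) * s₁ ≤ ex σ * s₁ := Nat.mul_le_mul_right _ (by omega)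
    rw [add_mul, one_mul] at this
    omega
  · set l : Fin n := ⟨n - 1, Nat.sub_lt hn one_pos⟩ with hl
    have hFl : (ModName.F l : ModName n m) = vm l 5 := rfl
    have hlast : ∀ i : Fin n, i = l ∨ i < l := by
      intro i
      rcases eq_or_lt_of_le (show (i : ℕ) ≤ n - 1 by omega) with h | h
      · exact Or.inl (Fin.ext h)
      · exact Or.inr h
    rw [hFl]
    constructor
    · intro hs M hM
      have hzl : z l = (5, 3) := by simpa [hσ] using hs
      have hlt : ∀ i k, i < l → q (vm i k) (vm l 5) := fun i k hi =>
        hz.fwd hq (by rw [modArc_vv]; exact Or.inl hi) (fun h => hi.ne h.1)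
      rcases mod_cases M with ⟨i, k, rfl⟩ | ⟨j, rfl⟩
      · rcases hlast i with rfl | hi
        · by_cases h3 : k = 3
          · subst h3
            exact ((hz.2 l 5 l 3).2 ⟨rfl, hzl⟩).2
          · have h5 : k ≠ 5 := fun h => hM (by rw [h])
            refine hz.fwd hq ?_ ?_
            · rw [modArc_vv]
              right
              refine ⟨rfl, Or.inl ?_⟩
              revert h3 h5
              fin_cases k <;> simp
            · rw [hzl]
              rintro ⟨_, h⟩
              simp at h
        · exact hlt i k hi
      · obtain ⟨i, hi⟩ := hg j
        rcases hlast i with rfl | hil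
        · rcases hi.2 with h | h
          · exact h.2.2
          · rw [hzl] at h
            simp at h
        · obtain ⟨k, hk⟩ := hi.ex_after
          exact hq.trans _ _ _ hk (hlt i k hil)
    · intro hlst
      have h3 := hlst (vm l 3) (fun h => by simpa using (vm_inj h).2)
      have := (hz.2 l 5 l 3).1 ⟨by rw [modArc_vv]; simp, h3⟩
      simp [hσ, this.2]

end Sl
namespace Sl

/-- Position of a rank inside its group. -/
def pos (b : Bool) (k : Fin 6) : ℕ :=
  if b = true then (k : ℕ) else if k = 3 then 5 else if k = 4 then 3 else if k = 5 then 4 else k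

lemma pos_le : ∀ b k, pos b k ≤ 5 := by decide

lemma pos_inj : ∀ b k k', pos b k = pos b k' → k = k' := by decide

lemma pos_back : ∀ (b : Bool) (k k' : Fin 6), (((k : ℕ) < (k' : ℕ) ∧
      ¬((k : ℕ) = 3 ∧ (k' : ℕ) = 5)) ∨ ((k : ℕ) = 5 ∧ (k' : ℕ) = 3)) → pos b k' < pos b k →
      (if b = true then ((5 : Fin 6), (3 : Fin 6)) else (3, 4)) = (k, k') := by decide

/-- First sorting key. -/
def key1 {n m : ℕ} (σ : Fin n → Bool) (s : Fin m → Fin n) (M : ModName n m) : ℕ :=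
  match (eqv n m).symm M with
  | .inl p => 12 * (p.1 : ℕ) + 2 * pos (σ p.1) p.2
  | .inr j => 12 * (s j : ℕ) + 9

/-- Second sorting key. -/
def key2 {n m : ℕ} (M : ModName n m) : ℕ :=
  match (eqv n m).symm M with
  | .inl _ => 0
  | .inr j => j

lemma key1_vm {n m : ℕ} (σ : Fin n → Bool) (s : Fin m → Fin n) (i : Fin n) (k : Fin 6) :
    key1 σ s (vm i k) = 12 * (i : ℕ) + 2 * pos (σ i) k := by
  have : (vm i k : ModName n m) = eqv n m (.inl (i, k)) := rfl
  rw [this, key1, Equiv.symm_apply_apply]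

lemma key1_T {n m : ℕ} (σ : Fin n → Bool) (s : Fin m → Fin n) (j : Fin m) :
    key1 σ s (.T j) = 12 * (s j : ℕ) + 9 := rfl

lemma key2_T {n m : ℕ} (j : Fin m) : key2 (.T j : ModName n m) = j := rfl

/-- The constructed order. -/
def qs {n m : ℕ} (σ : Fin n → Bool) (s : Fin m → Fin n) (M M' : ModName n m) : Prop :=
  key1 σ s M < key1 σ s M' ∨ (key1 σ s M = key1 σ s M' ∧ key2 M < key2 M')

lemma qs_sto {n m : ℕ} (σ : Fin n → Bool) (s : Fin m → Fin n) :
    IsStrictTotalOrder _ (qs σ s) where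
  irrefl M h := by
    rcases h with h | h
    · omega
    · omega
  trans a b c h1 h2 := by
    simp only [qs] at *
    omega
  trichotomous M M' h1 h2 := by
    have e1 : key1 σ s M = key1 σ s M' := by simp only [qs] at *; omega
    have e2 : key2 M = key2 M' := by simp only [qs] at *; omega
    rcases mod_cases M with ⟨i, k, rfl⟩ | ⟨j, rfl⟩ <;>
      rcases mod_cases M' with ⟨i', k', rfl⟩ | ⟨j', rfl⟩
    · rw [key1_vm, key1_vm] at e1
      have := pos_le (σ i) k
      have := pos_le (σ i') k'
      have hi : i = i' := Fin.ext (by omega)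
      subst hi
      rw [pos_inj (σ i) k k' (by omega)]
    · rw [key1_vm, key1_T] at e1
      omega
    · rw [key1_vm, key1_T] at e1
      omega
    · rw [key2_T, key2_T] at e2
      rw [Fin.ext e2]

lemma qs_vt {n m : ℕ} (σ : Fin n → Bool) (s : Fin m → Fin n) (i : Fin n) (k : Fin 6)
    (j : Fin m) : qs σ s (vm i k) (.T j) ↔ 12 * (i : ℕ) + 2 * pos (σ i) k < 12 * (s j : ℕ) + 9 := by
  simp only [qs, key1_vm, key1_T]
  omega

lemma qs_tv {n m : ℕ} (σ : Fin n → Bool) (s : Fin m → Fin n) (i : Fin n) (k : Fin 6)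
    (j : Fin m) : qs σ s (.T j) (vm i k) ↔
      ¬ 12 * (i : ℕ) + 2 * pos (σ i) k < 12 * (s j : ℕ) + 9 := by
  simp only [qs, key1_vm, key1_T]
  omega

lemma up_vv {n m : ℕ} (s₁ s₂ : ℕ) (occ : Fin n → Fin m → Option Bool) (σ : Fin n → Bool)
    (s : Fin m → Fin n) :
    ∑ p : (Fin n × Fin 6) × (Fin n × Fin 6),
        bw s₁ s₂ occ (qs σ s) (vm p.1.1 p.1.2) (vm p.2.1 p.2.2) ≤
      n * s₁ ^ 2 + ex σ * s₁ := by
  classical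
  let z : Fin n → Fin 6 × Fin 6 := fun i =>
    if σ i = true then ((5 : Fin 6), (3 : Fin 6)) else (3, 4)
  let g : Fin n ↪ ((Fin n × Fin 6) × (Fin n × Fin 6)) :=
    ⟨fun i => ((i, (z i).1), (i, (z i).2)), fun i i' h => congrArg (fun p => p.1.1) h⟩
  have h0 : ∀ p ∈ (Finset.univ : Finset ((Fin n × Fin 6) × (Fin n × Fin 6))),
      p ∉ Finset.univ.map g →
      bw s₁ s₂ occ (qs σ s) (vm p.1.1 p.1.2) (vm p.2.1 p.2.2) = 0 := by
    rintro ⟨⟨i, k⟩, ⟨i', k'⟩⟩ _ hp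
    rw [bw, if_neg]
    rintro ⟨ha, hb⟩
    apply hp
    rw [modArc_vv] at ha
    simp only [qs, key1_vm] at hb
    have := pos_le (σ i) k
    have := pos_le (σ i') k'
    have hk2 : key2 (vm i' k' : ModName n m) = 0 := by
      have : (vm i' k' : ModName n m) = eqv n m (.inl (i', k')) := rfl
      rw [this, key2, Equiv.symm_apply_apply]
    have hk2' : key2 (vm i k : ModName n m) = 0 := by
      have : (vm i k : ModName n m) = eqv n m (.inl (i, k)) := rfl
      rw [this, key2, Equiv.symm_apply_apply]
    rw [hk2, hk2'] at hb
    dsimp only at ha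
    rcases ha with ha | ⟨rfl, ha⟩
    · have : (i : ℕ) < i' := ha
      omega
    · have hz : z i = (k, k') := pos_back (σ i) k k' ha (by omega)
      refine Finset.mem_map.2 ⟨i, Finset.mem_univ _, ?_⟩
      simp only [g, Function.Embedding.coeFn_mk]
      change ((i, (z i).1), (i, (z i).2)) = _
      rw [hz]
  have h1 := Finset.sum_subset (Finset.subset_univ (Finset.univ.map g)) h0
  rw [← h1, Finset.sum_map]
  have : n * s₁ ^ 2 = ∑ i : Fin n, s₁ ^ 2 := by simp
  rw [this, ex, Finset.sum_mul, ← Finset.sum_add_distrib]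
  refine Finset.sum_le_sum fun i _ => ?_
  change bw s₁ s₂ occ (qs σ s) (vm i (z i).1) (vm i (z i).2) ≤ _
  rw [bw]
  split_ifs with h1 h2 h2
  · rw [size_vm, size_vm]
    simp [z, h2]
    nlinarith
  · rw [size_vm, size_vm]
    simp [z, h2]
    nlinarith
  · exact Nat.zero_le _
  · exact Nat.zero_le _

lemma ee_le {n : ℕ} (i : Fin n) : ee i ≤ 3 := by
  simp only [ee]; split_ifs <;> simp

lemma up_tv {n m : ℕ} (s₁ s₂ : ℕ) (occ : Fin n → Fin m → Option Bool) (σ : Fin n → Bool)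
    (s : Fin m → Fin n)
    (hs : ∀ j, (occ (s j) j = some true ∧ σ (s j) = true) ∨
      (occ (s j) j = some false ∧ σ (s j) = false)) (i : Fin n) (j : Fin m) :
    ∑ k, (bw s₁ s₂ occ (qs σ s) (.T j) (vm i k) + bw s₁ s₂ occ (qs σ s) (vm i k) (.T j)) ≤
      if i = s j then 2 * (s₁ * s₂) else 3 * (s₁ * s₂) + 3 * s₂ := by
  classical
  have he : ee i * s₂ ≤ 3 * s₂ := Nat.mul_le_mul_right _ (ee_le i)
  have hc := mul_comm s₁ s₂
  have hterm : ∀ k, bw s₁ s₂ occ (qs σ s) (.T j) (vm i k) +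
      bw s₁ s₂ occ (qs σ s) (vm i k) (.T j) =
      if (tb (occ i j) k = true ↔ 12 * (i : ℕ) + 2 * pos (σ i) k < 12 * (s j : ℕ) + 9) then
        s₁ * s₂ + (if k = 4 then ee i * s₂ else 0) else 0 := by
    intro k
    simp only [bw, modArc_tv, modArc_vt, tb_iff, size_vm, size_T, qs_tv, qs_vt]
    have h3 : s₂ * (s₁ + if k = 4 then ee i else 0) =
        s₁ * s₂ + (if k = 4 then ee i * s₂ else 0) := by split_ifs <;> ring
    rw [mul_comm _ s₂, h3]
    by_cases h1 : tb (occ i j) k = true <;>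
      by_cases h2 : 12 * (i : ℕ) + 2 * pos (σ i) k < 12 * (s j : ℕ) + 9 <;>
      simp only [h1, h2, not_true_eq_false, not_false_eq_true, and_true, and_false, and_self,
        if_true, if_false, iff_self, iff_true, iff_false, add_zero, zero_add, true_and, true_iff,
        Bool.false_eq_true]
  simp_rw [hterm]
  split_ifs with hi
  · subst hi
    have hp : ∀ k, (12 * (s j : ℕ) + 2 * pos (σ (s j)) k < 12 * (s j : ℕ) + 9) ↔
        pos (σ (s j)) k ≤ 4 := by intro k; omega
    simp_rw [hp]
    rw [Fin.sum_univ_six]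
    rcases hs j with ⟨h1, h2⟩ | ⟨h1, h2⟩
    · simp [h1, h2, tb, pos]
      omega
    · simp [h1, h2, tb, pos]
      omega
  · have hne : (i : ℕ) ≠ (s j : ℕ) := fun h => hi (Fin.ext h)
    rcases lt_or_gt_of_ne hne with hlt | hlt
    · have hp : ∀ k, (12 * (i : ℕ) + 2 * pos (σ i) k < 12 * (s j : ℕ) + 9) := by
        intro k
        have := pos_le (σ i) k
        omega
      simp only [hp, iff_true]
      rw [Fin.sum_univ_six]
      rcases occ i j with _ | _ | _ <;> simp [tb] <;> omega
    · have hp : ∀ k, ¬ (12 * (i : ℕ) + 2 * pos (σ i) k < 12 * (s j : ℕ) + 9) := by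
        intro k
        omega
      simp only [hp, iff_false]
      rw [Fin.sum_univ_six]
      rcases occ i j with _ | _ | _ <;> simp [tb] <;> omega

lemma upper {n m : ℕ} (s₁ s₂ : ℕ) (occ : Fin n → Fin m → Option Bool) (σ : Fin n → Bool)
    (hσ : Sat occ σ) (K N : ℕ) (hK : K + 1 = 3 * n) (hN : N + 1 = n) :
    ∃ q : ModName n m → ModName n m → Prop, IsStrictTotalOrder _ q ∧
      wc s₁ s₂ occ q ≤ n * s₁ ^ 2 + K * m * s₁ * s₂ + ex σ * s₁ +
        (m ^ 2 * s₂ ^ 2 + 9 * m * N * s₂) := by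
  classical
  choose s hs using hσ
  refine ⟨qs σ s, qs_sto σ s, ?_⟩
  rw [wc_split]
  have h1 := up_vv s₁ s₂ occ σ s
  have h2 : ∑ j, ∑ i, ∑ k, (bw s₁ s₂ occ (qs σ s) (.T j) (vm i k) +
      bw s₁ s₂ occ (qs σ s) (vm i k) (.T j)) ≤ m * (K * (s₁ * s₂) + 3 * N * s₂) := by
    have : m * (K * (s₁ * s₂) + 3 * N * s₂) = ∑ j : Fin m, (K * (s₁ * s₂) + 3 * N * s₂) := by simp
    rw [this]
    refine Finset.sum_le_sum fun j _ => ?_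
    refine le_trans (Finset.sum_le_sum fun i _ => up_tv s₁ s₂ occ σ s hs i j) ?_
    have e : ∑ i : Fin n, (if i = s j then 2 * (s₁ * s₂) else 3 * (s₁ * s₂) + 3 * s₂) +
        (s₁ * s₂ + 3 * s₂) = n * (3 * (s₁ * s₂) + 3 * s₂) := by
      have e1 : s₁ * s₂ + 3 * s₂ = ∑ i : Fin n, if i = s j then s₁ * s₂ + 3 * s₂ else 0 := by simp
      have e2 : n * (3 * (s₁ * s₂) + 3 * s₂) = ∑ i : Fin n, (3 * (s₁ * s₂) + 3 * s₂) := by simp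
      rw [e2, e1, ← Finset.sum_add_distrib]
      refine Finset.sum_congr rfl fun i _ => ?_
      split_ifs <;> ring
    have hK' : K = 3 * N + 2 := by omega
    have hn' : n * (3 * (s₁ * s₂) + 3 * s₂) = (N + 1) * (3 * (s₁ * s₂) + 3 * s₂) := by rw [hN]
    rw [hn'] at e
    rw [hK']
    have e3 : (N + 1) * (3 * (s₁ * s₂) + 3 * s₂) =
        ((3 * N + 2) * (s₁ * s₂) + 3 * N * s₂) + (s₁ * s₂ + 3 * s₂) := by ring
    omega
  have h3 : ∑ j, ∑ j', bw s₁ s₂ occ (qs σ s) (.T j) (.T j') ≤ m ^ 2 * s₂ ^ 2 := by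
    have : m ^ 2 * s₂ ^ 2 = ∑ j : Fin m, ∑ j' : Fin m, s₂ ^ 2 := by simp; ring
    rw [this]
    refine Finset.sum_le_sum fun j _ => Finset.sum_le_sum fun j' _ => ?_
    rw [bw, size_T, size_T]
    split_ifs
    · rw [sq]
    · exact Nat.zero_le _
  have h4 : m * (K * (s₁ * s₂) + 3 * N * s₂) + 6 * m * N * s₂ =
    K * m * s₁ * s₂ + 9 * m * N * s₂ := by ring
  omega

end Sl
/-- Under the three inequalities on `s₁, s₂`, the sink of `F_n` is a Slater winner of
`T_φ` iff `φ` has a maximum-weight satisfying assignment setting `x_n` to true. -/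
theorem stmt10 (n m s₁ s₂ : ℕ) (hn : 0 < n) (hm : 0 < m) (hs₁ : 0 < s₁) (hs₂ : 0 < s₂)
    (occ : Fin n → Fin m → Option Bool)
    (h3lit : ∀ j : Fin m, ({i : Fin n | occ i j ≠ none}).ncard ≤ 3)
    (hallF : ∀ j : Fin m, ∃ i : Fin n, occ i j = some false)
    (hineq1 : s₁ ^ 2 > (3 * n - 1) * m * s₁ * s₂ + 3 * n * s₁ + m ^ 2 * s₂ ^ 2 +
      9 * m * (n - 1) * s₂)
    (hineq2 : s₁ * s₂ > 3 * n * s₁ + m ^ 2 * s₂ ^ 2 + 9 * m * (n - 1) * s₂)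
    (hineq3 : s₁ > m ^ 2 * s₂ ^ 2 + 9 * m * (n - 1) * s₂) :
    SlaterWinner (arc (s₁ := s₁) (s₂ := s₂) occ) (fnSink n m s₁ s₂ hn hs₁) ↔
      ∃ σ : Fin n → Bool, Sat occ σ ∧ σ ⟨n - 1, Nat.sub_lt hn one_pos⟩ = true ∧
        ∀ σ' : Fin n → Bool, Sat occ σ' → wt σ' ≤ wt σ := by
  obtain ⟨K, hK⟩ : ∃ K, K + 1 = 3 * n := ⟨3 * n - 1, by omega⟩
  obtain ⟨N, hN⟩ : ∃ N, N + 1 = n := ⟨n - 1, by omega⟩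
  have hK' : 3 * n - 1 = K := by omega
  have hN' : n - 1 = N := by omega
  have core' : ∀ q : ModName n m → ModName n m → Prop, IsStrictTotalOrder _ q →
      (∀ q', IsStrictTotalOrder _ q' → Sl.wc s₁ s₂ occ q ≤ Sl.wc s₁ s₂ occ q') →
      ∃ σ : Fin n → Bool, Sat occ σ ∧ (∀ σ', Sat occ σ' → Sl.ex σ ≤ Sl.ex σ') ∧
      (σ ⟨n - 1, Nat.sub_lt hn one_pos⟩ = true ↔
        ∀ M, M ≠ .F ⟨n - 1, Nat.sub_lt hn one_pos⟩ →
          q M (.F ⟨n - 1, Nat.sub_lt hn one_pos⟩)) := by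
    intro q hq hmin
    rw [hK', hN'] at hineq1
    rw [hN'] at hineq2 hineq3
    refine Sl.core (s₂ := s₂) hn occ hallF K (m ^ 2 * s₂ ^ 2 + 9 * m * N * s₂) hK (by omega) (by omega)
      hineq3 q hq ?_
    intro σ hσ
    obtain ⟨q', hq', hle⟩ := Sl.upper s₁ s₂ occ σ hσ K N hK hN
    exact le_trans (hmin q' hq') hle
  have hpos : 0 < Fintype.card (∀ M, Fin (msize n m s₁ s₂ M)) := by
    rw [Fintype.card_pi]
    refine Finset.prod_pos fun M _ => ?_
    rw [Fintype.card_fin]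
    cases M <;> simp only [msize] <;> first | assumption | (split_ifs <;> omega)
  have hmpos : ∀ M, 0 < msize n m s₁ s₂ M := by
    intro M
    cases M <;> simp only [msize] <;> first | assumption | (split_ifs <;> omega)
  constructor
  · rintro ⟨r, ⟨hr, hropt⟩, hlast⟩
    have hle : ∀ q, IsStrictTotalOrder _ q →
        (fasSet (arc occ) r).ncard ≤ Sl.wc s₁ s₂ occ q := by
      intro q hq
      rw [← Sl.blow_cost occ q hq]
      exact hropt _ (Sl.blow_sto q hq)
    have havg := Sl.avg occ r hr
    have heq : ∀ f : (∀ M, Fin (msize n m s₁ s₂ M)),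
        Sl.wc s₁ s₂ occ (Sl.qf r f) ≤ (fasSet (arc occ) r).ncard := by
      intro f
      by_contra hc
      have : ∑ f : (∀ M, Fin (msize n m s₁ s₂ M)), (fasSet (arc occ) r).ncard <
          ∑ f : (∀ M, Fin (msize n m s₁ s₂ M)), Sl.wc s₁ s₂ occ (Sl.qf r f) :=
        Finset.sum_lt_sum (fun g _ => hle _ (Sl.qf_sto r hr g)) ⟨f, Finset.mem_univ _, by omega⟩
      rw [Finset.sum_const, Finset.card_univ, smul_eq_mul] at this
      omega
    let f : ∀ M, Fin (msize n m s₁ s₂ M) := fun M =>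
      ⟨msize n m s₁ s₂ M - 1, Nat.sub_lt (hmpos M) one_pos⟩
    obtain ⟨σ, h1, h2, h3⟩ := core' (Sl.qf r f) (Sl.qf_sto r hr f)
      (fun q' hq' => le_trans (heq f) (hle q' hq'))
    have hσn := h3.2 (fun M hM => hlast ⟨M, f M⟩ (fun h => hM (congrArg Sigma.fst h)))
    refine ⟨σ, h1, hσn, fun σ' hσ' => ?_⟩
    have e1 := Sl.ex_eq hn σ
    have e2 := Sl.ex_eq hn σ'
    have e3 := h2 σ' hσ'
    rw [if_pos hσn] at e1
    split_ifs at e2 <;> omega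
  · rintro ⟨σ, hσ, hσn, hmax⟩
    obtain ⟨q0, hq0, -⟩ := Sl.upper s₁ s₂ occ σ hσ K N hK hN
    let P : ℕ → Prop := fun c => ∃ q : ModName n m → ModName n m → Prop,
      IsStrictTotalOrder _ q ∧ Sl.wc s₁ s₂ occ q = c
    have hP : ∃ c, P c := ⟨_, q0, hq0, rfl⟩
    classical
    obtain ⟨q, hq, hqc⟩ := Nat.find_spec hP
    have hmin : ∀ q', IsStrictTotalOrder _ q' → Sl.wc s₁ s₂ occ q ≤ Sl.wc s₁ s₂ occ q' := by
      intro q' hq'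
      rw [hqc]
      exact Nat.find_min' hP ⟨q', hq', rfl⟩
    obtain ⟨τ, h1, h2, h3⟩ := core' q hq hmin
    have hτn : τ ⟨n - 1, Nat.sub_lt hn one_pos⟩ = true := by
      by_contra hc
      have e1 := Sl.ex_eq hn σ
      have e2 := Sl.ex_eq hn τ
      have e3 := h2 σ hσ
      have e4 := hmax τ h1
      rw [if_pos hσn] at e1
      rw [if_neg hc] at e2
      omega
    have hF := h3.1 hτn
    refine ⟨Sl.blow s₁ s₂ q, ⟨Sl.blow_sto q hq, fun r' hr' => ?_⟩, ?_⟩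
    · rw [Sl.blow_cost occ q hq]
      have havg := Sl.avg occ r' hr'
      have : ∑ f : (∀ M, Fin (msize n m s₁ s₂ M)), Sl.wc s₁ s₂ occ q ≤
          ∑ f : (∀ M, Fin (msize n m s₁ s₂ M)), Sl.wc s₁ s₂ occ (Sl.qf r' f) :=
        Finset.sum_le_sum (fun g _ => hmin _ (Sl.qf_sto r' hr' g))
      rw [Finset.sum_const, Finset.card_univ, smul_eq_mul] at this
      exact Nat.le_of_mul_le_mul_left (le_trans this havg) hpos
    · rintro ⟨M, a⟩ hne
      by_cases hM : M = .F ⟨n - 1, Nat.sub_lt hn one_pos⟩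
      · subst hM
        refine Or.inr ⟨rfl, ?_⟩
        have ha : (a : ℕ) < s₁ := a.2
        change (a : ℕ) < s₁ - 1
        by_contra hc
        apply hne
        have : a = ⟨s₁ - 1, Nat.sub_lt hs₁ one_pos⟩ := Fin.ext (show (a : ℕ) = s₁ - 1 by omega)
        rw [this]
        rfl
      · exact Or.inl (hF M hM)
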